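/- arXiv:1106.4075 — 2 statements merged into one kernel-verified Lean document; each statement's English description precedes it below -/
import Mathlib

section
/- Let u, v be nonnegative functions in L¹(ℝ^d) and define kernels K(x,y) = ∫_{ℝ^d} e^{i⟨x−y,ξ⟩} u(ξ) dξ and G(x,y) = ∫_{ℝ^d} e^{i⟨x−y,ξ⟩} v(ξ) dξ for x, y ∈ ℝ^d. Then there exists λ ≥ 0 such that λG − K is a positive semidefinite kernel if and only if the set {t ∈ ℝ^d : u(t) > 0 and v(t) = 0} has Lebesgue measure zero and u/v is essentially bounded (with respect to Lebesgue measure) on {t ∈ ℝ^d : v(t) > 0}; in that case, the infimum of all such λ equals the essential supremum of u/v on {t ∈ ℝ^d : v(t) > 0}. -/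
open MeasureTheory
open scoped ComplexOrder

/-- A function `K : X × X → ℂ` is a positive semidefinite kernel if every finite
quadratic form `∑ j, ∑ k, c j * conj (c k) * K (x j) (x k)` is a nonnegative real number. -/
def IsPSDKernel {X : Type*} (K : X → X → ℂ) : Prop :=
  ∀ (n : ℕ) (x : Fin n → X) (c : Fin n → ℂ),
    0 ≤ ∑ j, ∑ k, c j * (starRingEnd ℂ) (c k) * K (x j) (x k)

/-!
The quadratic form of the kernel `charFun μ (x - y) - charFun ν (x - y)` at a trigonometric
polynomial `p` is `∫ ‖p‖² ∂μ - ∫ ‖p‖² ∂ν`. Trigonometric polynomials are dense in `L²(μ + ν)`,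
because a function orthogonal to all of them has vanishing Fourier transform, so positivity extends
to all of `L²(μ + ν)`; tested on indicators it says `ν ≤ μ`. Applied to the positive and negative
parts of the density `λ v - u`, this makes `λ G - K` positive semidefinite if and only if `u ≤ λ v`
almost everywhere.
-/

section WithDensity

variable {α : Type*} [MeasurableSpace α] {μ : Measure α}

lemma withDensity_ofReal_neg_le_iff {w : α → ℝ} (hw : Integrable w μ) :
    μ.withDensity (fun t => .ofReal (-w t)) ≤ μ.withDensity (fun t => .ofReal (w t)) ↔
      0 ≤ᵐ[μ] w := by
  refine ⟨fun h => ae_nonneg_of_forall_setIntegral_nonneg hw fun s hs _ => ?_,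
    fun h => withDensity_mono ?_⟩
  · have hle := h s
    simp only [withDensity_apply _ hs] at hle
    rw [integral_eq_lintegral_pos_part_sub_lintegral_neg_part hw.integrableOn, sub_nonneg]
    exact ENNReal.toReal_mono hw.integrableOn.lintegral_lt_top.ne hle
  · filter_upwards [h] with t ht
    exact ENNReal.ofReal_le_ofReal ((neg_nonpos.2 ht).trans ht)

lemma integral_withDensity_ofReal {F : Type*} [NormedAddCommGroup F] [NormedSpace ℝ F]
    {w : α → ℝ} (hw : AEMeasurable w μ) (f : α → F) :
    ∫ t, f t ∂μ.withDensity (fun t => .ofReal (w t)) = ∫ t, max (w t) 0 • f t ∂μ := by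
  rw [integral_withDensity_eq_integral_toReal_smul₀ hw.ennreal_ofReal (by simp)]
  simp only [ENNReal.toReal_ofReal']

lemma integral_smul_eq_sub_integral_withDensity {F : Type*} [NormedAddCommGroup F]
    [NormedSpace ℝ F] {w : α → ℝ} (hw : Integrable w μ) {f : α → F} {C : ℝ}
    (hf : AEStronglyMeasurable f μ) (hfC : ∀ᵐ t ∂μ, ‖f t‖ ≤ C) :
    ∫ t, w t • f t ∂μ = ∫ t, f t ∂μ.withDensity (fun t => .ofReal (w t)) -
      ∫ t, f t ∂μ.withDensity (fun t => .ofReal (-w t)) := by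
  have hpos : Integrable (fun t => max (w t) 0 • f t) μ := hw.pos_part.smul_bdd C hf hfC
  have hneg : Integrable (fun t => max (-w t) 0 • f t) μ := hw.neg_part.smul_bdd C hf hfC
  rw [integral_withDensity_ofReal hw.aemeasurable,
    integral_withDensity_ofReal (w := fun t => -w t) hw.aemeasurable.neg, ← integral_sub hpos hneg]
  simp only [← sub_smul, max_zero_sub_max_neg_zero_eq_self]

end WithDensity

section EssSup

variable {α : Type*} [MeasurableSpace α] {μ : Measure α}

lemma ae_le_const_mul_iff_div_le {u v : α → ℝ} (hv0 : ∀ t, 0 ≤ v t) (hv : AEMeasurable v μ)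
    (c : ℝ) :
    (∀ᵐ t ∂μ, u t ≤ c * v t) ↔
      μ {t | 0 < u t ∧ v t = 0} = 0 ∧ ∀ᵐ t ∂μ.restrict {t | 0 < v t}, u t / v t ≤ c := by
  rw [measure_eq_zero_iff_ae_notMem, ae_restrict_iff'₀ (nullMeasurableSet_lt aemeasurable_const hv),
    ← Filter.eventually_and]
  refine Filter.eventually_congr (.of_forall fun t => ?_)
  rcases (hv0 t).eq_or_lt with h | h
  · simp [← h]
  · simp [h, h.ne', div_le_iff₀ h]

lemma sInf_nonneg_ae_le_eq_essSup {f : α → ℝ} (hf : 0 ≤ᵐ[μ] f) :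
    sInf {c : ℝ | 0 ≤ c ∧ ∀ᵐ t ∂μ, f t ≤ c} = essSup f μ := by
  have hess : essSup f μ = sInf {c : ℝ | ∀ᵐ t ∂μ, f t ≤ c} := by
    simp only [essSup_eq_sInf, ae_iff, not_le]
  rw [hess]
  rcases eq_zero_or_neZero μ with rfl | _
  · simp only [ae_zero, Filter.eventually_bot, and_true, Set.ofPred_true, Real.sInf_univ]
    exact csInf_Ici
  · congr 1 with c
    refine and_iff_right_of_imp fun hc => ?_
    obtain ⟨t, h0t, htc⟩ := (hf.and hc).exists
    exact h0t.trans htc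

end EssSup

lemma memLp_boundedContinuousFunction {α F : Type*} [TopologicalSpace α] [MeasurableSpace α]
    [OpensMeasurableSpace α] [NormedAddCommGroup F] [SecondCountableTopologyEither α F]
    {μ : Measure α} [IsFiniteMeasure μ] (f : BoundedContinuousFunction α F) (p : ENNReal) :
    MemLp f p μ :=
  .of_bound f.continuous.aestronglyMeasurable ‖f‖ (.of_forall f.norm_coe_le_norm)

section CharFun

open BoundedContinuousFunction

variable {E : Type*} [NormedAddCommGroup E] [InnerProductSpace ℝ E]

lemma norm_sq_sum_mul_innerProbChar {ι : Type*} [Fintype ι] (x : ι → E) (c : ι → ℂ) (ξ : E) :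
    ((‖∑ j, c j * innerProbChar (x j) ξ‖ ^ 2 : ℝ) : ℂ) =
      ∑ j, ∑ k, c j * (starRingEnd ℂ) (c k) * innerProbChar (x j - x k) ξ := by
  rw [Complex.ofReal_pow, ← Complex.mul_conj', map_sum, Finset.sum_mul_sum]
  refine Finset.sum_congr rfl fun j _ => Finset.sum_congr rfl fun k _ => ?_
  have hchar : innerProbChar (x j - x k) ξ =
      innerProbChar (x j) ξ * (starRingEnd ℂ) (innerProbChar (x k) ξ) := by
    simp only [innerProbChar_apply, ← Complex.exp_conj, ← Complex.exp_add, inner_sub_right]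
    congr 1
    simp only [Complex.ofReal_sub, map_mul, Complex.conj_ofReal, Complex.conj_I, mul_neg]
    ring
  rw [hchar, map_mul]
  ring

lemma norm_innerProbChar (x ξ : E) : ‖innerProbChar x ξ‖ = 1 := by
  rw [innerProbChar_apply, Complex.norm_exp_ofReal_mul_I]

variable [MeasurableSpace E]

/-- The translation-invariant kernel on `E` given by the Fourier transform of the density `w` with
respect to `μ`. -/
noncomputable def fourierKernel (μ : Measure E) (w : E → ℝ) (x y : E) : ℂ :=
  ∫ ξ, Complex.exp (Complex.I * ((inner ℝ (x - y) ξ : ℝ) : ℂ)) * (w ξ : ℂ) ∂μ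

lemma fourierKernel_eq_integral_smul {μ : Measure E} (w : E → ℝ) (x y : E) :
    fourierKernel μ w x y = ∫ ξ, w ξ • innerProbChar (x - y) ξ ∂μ := by
  simp only [fourierKernel, innerProbChar_apply, Complex.real_smul, real_inner_comm,
    mul_comm Complex.I, mul_comm (Complex.exp _)]

variable [BorelSpace E] {μ ν : Measure E}

lemma integrable_smul_innerProbChar {𝕜 : Type*} [NormedRing 𝕜] [Module 𝕜 ℂ] [IsBoundedSMul 𝕜 ℂ]
    {w : E → 𝕜} (hw : Integrable w μ) (x : E) :
    Integrable (fun ξ => w ξ • innerProbChar x ξ) μ :=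
  hw.smul_bdd 1 (innerProbChar x).continuous.aestronglyMeasurable
    (.of_forall fun ξ => (norm_innerProbChar x ξ).le)

lemma integral_re_smul_innerProbChar {g : E → ℂ} (hg : Integrable g μ) (x : E) :
    ∫ ξ, (g ξ).re • innerProbChar x ξ ∂μ = (∫ ξ, g ξ * innerProbChar x ξ ∂μ +
      (starRingEnd ℂ) (∫ ξ, g ξ * innerProbChar (-x) ξ ∂μ)) / 2 := by
  have hre (ξ : E) : (g ξ).re • innerProbChar x ξ = (g ξ * innerProbChar x ξ +
      (starRingEnd ℂ) (g ξ * innerProbChar (-x) ξ)) / 2 := by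
    have hconj : (starRingEnd ℂ) (innerProbChar (-x) ξ) = innerProbChar x ξ := by
      simp [innerProbChar_apply, ← Complex.exp_conj]
    rw [map_mul, hconj, ← add_mul, Complex.add_conj, Complex.real_smul]
    push_cast
    ring
  have hint (y : E) : Integrable (fun ξ => g ξ * innerProbChar y ξ) μ :=
    integrable_smul_innerProbChar hg y
  have hint_conj : Integrable (fun ξ => (starRingEnd ℂ) (g ξ * innerProbChar (-x) ξ)) μ :=
    Complex.conjCLE.integrable_comp_iff.2 (hint (-x))
  simp only [hre]
  rw [integral_div, integral_add (hint x) hint_conj, integral_conj]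

lemma integral_smul_innerProbChar {w : E → ℝ} (hw : Integrable w μ) (x : E) :
    ∫ ξ, w ξ • innerProbChar x ξ ∂μ = charFun (μ.withDensity fun ξ => .ofReal (w ξ)) x -
      charFun (μ.withDensity fun ξ => .ofReal (-w ξ)) x := by
  simp only [charFun_eq_integral_innerProbChar]
  exact integral_smul_eq_sub_integral_withDensity hw
    (innerProbChar x).continuous.aestronglyMeasurable
    (.of_forall fun ξ => (norm_innerProbChar x ξ).le)

lemma sum_sum_mul_charFun_sub [IsFiniteMeasure μ] {ι : Type*} [Fintype ι] (x : ι → E) (c : ι → ℂ) :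
    ∑ j, ∑ k, c j * (starRingEnd ℂ) (c k) * charFun μ (x j - x k) =
      ((∫ ξ, ‖∑ j, c j * innerProbChar (x j) ξ‖ ^ 2 ∂μ : ℝ) : ℂ) := by
  have hint (j k : ι) : Integrable
      (fun ξ => c j * (starRingEnd ℂ) (c k) * innerProbChar (x j - x k) ξ) μ :=
    ((innerProbChar _).integrable μ).const_mul _
  simp only [← integral_complex_ofReal, norm_sq_sum_mul_innerProbChar]
  rw [integral_finsetSum _ fun j _ => integrable_finsetSum _ fun k _ => hint j k]
  refine Finset.sum_congr rfl fun j _ => ?_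
  rw [integral_finsetSum _ fun k _ => hint j k]
  simp only [integral_const_mul, charFun_eq_integral_innerProbChar]

lemma const_mul_fourierKernel_sub {u v : E → ℝ} (hu : Integrable u μ) (hv : Integrable v μ)
    (c : ℝ) (x y : E) :
    (c : ℂ) * fourierKernel μ v x y - fourierKernel μ u x y =
      fourierKernel μ (fun ξ => c * v ξ - u ξ) x y := by
  have hcv : Integrable (fun ξ => (c * v ξ) • innerProbChar (x - y) ξ) μ :=
    integrable_smul_innerProbChar (hv.const_mul c) (x - y)
  simp only [fourierKernel_eq_integral_smul, sub_smul]
  rw [integral_sub hcv (integrable_smul_innerProbChar hu (x - y))]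
  simp only [mul_smul, Complex.real_smul, integral_const_mul]

variable [SecondCountableTopology E] [CompleteSpace E]

lemma ae_eq_zero_of_integral_smul_innerProbChar_eq_zero {w : E → ℝ} (hw : Integrable w μ)
    (h : ∀ x, ∫ ξ, w ξ • innerProbChar x ξ ∂μ = 0) : w =ᵐ[μ] 0 := by
  have := isFiniteMeasure_withDensity_ofReal hw.2
  have := isFiniteMeasure_withDensity_ofReal hw.neg.2
  have hparts : μ.withDensity (fun ξ => .ofReal (w ξ)) = μ.withDensity fun ξ => .ofReal (-w ξ) :=
    Measure.ext_of_charFun <| funext fun x =>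
      sub_eq_zero.1 ((integral_smul_innerProbChar hw x).symm.trans (h x))
  have hpos : 0 ≤ᵐ[μ] w := (withDensity_ofReal_neg_le_iff hw).1 hparts.ge
  have hneg : 0 ≤ᵐ[μ] -w :=
    (withDensity_ofReal_neg_le_iff hw.neg).1 (by simpa using hparts.le)
  filter_upwards [hpos, hneg] with ξ h₁ h₂
  exact le_antisymm (neg_nonneg.1 h₂) h₁

lemma ae_eq_zero_of_integral_mul_innerProbChar_eq_zero {g : E → ℂ} (hg : Integrable g μ)
    (h : ∀ x, ∫ ξ, g ξ * innerProbChar x ξ ∂μ = 0) : g =ᵐ[μ] 0 := by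
  have re_eq_zero {f : E → ℂ} (hf : Integrable f μ)
      (h : ∀ x, ∫ ξ, f ξ * innerProbChar x ξ ∂μ = 0) : (fun ξ => (f ξ).re) =ᵐ[μ] 0 :=
    ae_eq_zero_of_integral_smul_innerProbChar_eq_zero hf.re fun x =>
      (integral_re_smul_innerProbChar hf x).trans (by simp [h])
  have him := re_eq_zero (hg.const_mul (-Complex.I)) fun x => by
    simp only [mul_assoc, integral_const_mul, h, mul_zero]
  filter_upwards [re_eq_zero hg h, him] with ξ h₁ h₂
  exact Complex.ext h₁ (by simpa using h₂)

variable (E) in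
/-- The trigonometric polynomials on `E`, i.e. the linear combinations of the characters
`ξ ↦ exp (i⟪ξ, x⟫)`, as bounded continuous functions. -/
noncomputable def trigPoly : Submodule ℂ (E →ᵇ ℂ) :=
  Submodule.span ℂ (Set.range innerProbChar)

lemma topologicalClosure_map_toLp_trigPoly [IsFiniteMeasure μ] :
    ((trigPoly E).map
      (toLp 2 μ ℂ : (E →ᵇ ℂ) →L[ℂ] Lp ℂ 2 μ).toLinearMap).topologicalClosure = ⊤ := by
  rw [Submodule.topologicalClosure_eq_top_iff, Submodule.eq_bot_iff]
  intro g hg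
  rw [Submodule.mem_orthogonal'] at hg
  have hgi : Integrable g μ := (Lp.memLp g).integrable one_le_two
  have hchar (x : E) : ∫ ξ, (starRingEnd ℂ) (g ξ) * innerProbChar x ξ ∂μ = 0 := by
    have horth := hg _ (Submodule.mem_map_of_mem (Submodule.subset_span ⟨x, rfl⟩))
    rw [L2.inner_def] at horth
    rw [← horth]
    refine integral_congr_ae ?_
    filter_upwards [coeFn_toLp 2 μ ℂ (innerProbChar x)] with ξ hξ
    simp [hξ, mul_comm]
  have hconj := ae_eq_zero_of_integral_mul_innerProbChar_eq_zero
    (Complex.conjCLE.integrable_comp_iff.2 hgi) hchar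
  rw [Lp.eq_zero_iff_ae_eq_zero]
  filter_upwards [hconj] with ξ hξ
  simpa using hξ

lemma exists_trigPoly_eLpNorm_sub_lt [IsFiniteMeasure μ] {f : E → ℂ} (hf : MemLp f 2 μ)
    {ε : ENNReal} (hε : 0 < ε) : ∃ p ∈ trigPoly E, eLpNorm (f - ⇑p) 2 μ < ε := by
  have hmem : hf.toLp f ∈ ((trigPoly E).map
      (toLp 2 μ ℂ : (E →ᵇ ℂ) →L[ℂ] Lp ℂ 2 μ).toLinearMap).topologicalClosure := by
    rw [topologicalClosure_map_toLp_trigPoly]; trivial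
  obtain ⟨_, ⟨p, hp, rfl⟩, hlt⟩ := EMetric.mem_closure_iff.1 hmem ε hε
  exact ⟨p, hp, by rwa [← Lp.edist_toLp_toLp f p hf (memLp_boundedContinuousFunction p 2)]⟩

lemma eLpNorm_le_of_forall_trigPoly [IsFiniteMeasure μ] [IsFiniteMeasure ν]
    (h : ∀ p ∈ trigPoly E, eLpNorm p 2 ν ≤ eLpNorm p 2 μ) {f : E → ℂ} (hf : MemLp f 2 (μ + ν)) :
    eLpNorm f 2 ν ≤ eLpNorm f 2 μ := by
  refine ENNReal.le_of_forall_pos_le_add fun ε hε _ => ?_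
  obtain ⟨p, hp, hlt⟩ :=
    exists_trigPoly_eLpNorm_sub_lt hf (ENNReal.half_pos (ENNReal.coe_ne_zero.2 hε.ne'))
  have hltν : eLpNorm (f - ⇑p) 2 ν ≤ ε / 2 :=
    (eLpNorm_mono_measure _ (Measure.le_add_left le_rfl)).trans hlt.le
  have hltμ : eLpNorm (f - ⇑p) 2 μ ≤ ε / 2 :=
    (eLpNorm_mono_measure _ (Measure.le_add_right le_rfl)).trans hlt.le
  have hfν : AEStronglyMeasurable f ν := hf.1.mono_measure (Measure.le_add_left le_rfl)
  have hfμ : AEStronglyMeasurable f μ := hf.1.mono_measure (Measure.le_add_right le_rfl)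
  have hp' (σ : Measure E) : AEStronglyMeasurable p σ := p.continuous.aestronglyMeasurable
  calc eLpNorm f 2 ν ≤ eLpNorm (f - ⇑p) 2 ν + eLpNorm p 2 ν := by
        simpa using eLpNorm_add_le (hfν.sub (hp' ν)) (hp' ν) one_le_two
    _ ≤ ε / 2 + eLpNorm p 2 μ := add_le_add hltν (h p hp)
    _ ≤ ε / 2 + (eLpNorm f 2 μ + eLpNorm (f - ⇑p) 2 μ) := by
        gcongr
        simpa using eLpNorm_sub_le hfμ (hfμ.sub (hp' μ)) one_le_two
    _ ≤ ε / 2 + (eLpNorm f 2 μ + ε / 2) := by gcongr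
    _ = eLpNorm f 2 μ + ε := by
        rw [add_left_comm, ENNReal.add_halves]

lemma measure_le_of_forall_trigPoly [IsFiniteMeasure μ] [IsFiniteMeasure ν]
    (h : ∀ p ∈ trigPoly E, ∫ ξ, ‖p ξ‖ ^ 2 ∂ν ≤ ∫ ξ, ‖p ξ‖ ^ 2 ∂μ) : ν ≤ μ := by
  have hL2 (p : E →ᵇ ℂ) (hp : p ∈ trigPoly E) : eLpNorm p 2 ν ≤ eLpNorm p 2 μ := by
    simp only [(memLp_boundedContinuousFunction p 2).eLpNorm_eq_integral_rpow_norm two_ne_zero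
      ENNReal.ofNat_ne_top, ENNReal.toReal_ofNat, Real.rpow_ofNat]
    exact ENNReal.ofReal_le_ofReal (Real.rpow_le_rpow (by positivity) (h p hp) (by norm_num))
  refine Measure.le_iff.2 fun s hs => ?_
  have hle := eLpNorm_le_of_forall_trigPoly hL2 (f := s.indicator fun _ => 1)
    ((memLp_const 1).indicator hs)
  simp only [eLpNorm_indicator_const hs two_ne_zero ENNReal.ofNat_ne_top, enorm_one, one_mul] at hle
  exact (ENNReal.rpow_le_rpow_iff (by norm_num)).1 hle

theorem isPSDKernel_charFun_sub_iff [IsFiniteMeasure μ] [IsFiniteMeasure ν] :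
    IsPSDKernel (fun x y : E => charFun μ (x - y) - charFun ν (x - y)) ↔ ν ≤ μ := by
  simp only [IsPSDKernel, mul_sub, Finset.sum_sub_distrib, sum_sum_mul_charFun_sub, sub_nonneg,
    Complex.real_le_real]
  refine ⟨fun h => measure_le_of_forall_trigPoly fun p hp => ?_, fun h n x c => ?_⟩
  · obtain ⟨n, c, χ, rfl⟩ := Submodule.mem_span_set'.1 hp
    choose x hx using fun j => (χ j).2
    simpa [← hx] using h n x c
  · let p : E →ᵇ ℂ := ∑ j, c j • innerProbChar (x j)
    have hp : Integrable (fun ξ => ‖p ξ‖ ^ 2) μ :=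
      (memLp_boundedContinuousFunction p 2).integrable_norm_pow two_ne_zero
    refine integral_mono_measure h (.of_forall fun ξ => sq_nonneg _) ?_
    simpa [p] using hp

lemma isPSDKernel_fourierKernel_iff {w : E → ℝ} (hw : Integrable w μ) :
    IsPSDKernel (fourierKernel μ w) ↔ 0 ≤ᵐ[μ] w := by
  have := isFiniteMeasure_withDensity_ofReal hw.2
  have := isFiniteMeasure_withDensity_ofReal hw.neg.2
  rw [← withDensity_ofReal_neg_le_iff hw, ← isPSDKernel_charFun_sub_iff]
  simp only [← integral_smul_innerProbChar hw, ← fourierKernel_eq_integral_smul]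

lemma isPSDKernel_const_mul_fourierKernel_sub_iff {u v : E → ℝ} (hu : Integrable u μ)
    (hv : Integrable v μ) (c : ℝ) :
    IsPSDKernel (fun x y => (c : ℂ) * fourierKernel μ v x y - fourierKernel μ u x y) ↔
      ∀ᵐ ξ ∂μ, u ξ ≤ c * v ξ := by
  have hw : Integrable (fun ξ => c * v ξ - u ξ) μ := (hv.const_mul c).sub hu
  simp only [const_mul_fourierKernel_sub hu hv, isPSDKernel_fourierKernel_iff hw,
    Filter.EventuallyLE, Pi.zero_apply, sub_nonneg]

theorem fourierDensity_inclusion_iff_general {u v : E → ℝ} (hu0 : ∀ t, 0 ≤ u t)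
    (hv0 : ∀ t, 0 ≤ v t) (hu : Integrable u μ) (hv : Integrable v μ) :
    ((∃ lam : ℝ, 0 ≤ lam ∧
        IsPSDKernel (fun x y => (lam : ℂ) * fourierKernel μ v x y - fourierKernel μ u x y)) ↔
      (μ {t | 0 < u t ∧ v t = 0} = 0 ∧
        ∃ M : ℝ, ∀ᵐ t ∂(μ.restrict {t | 0 < v t}), u t / v t ≤ M)) ∧
    ((μ {t | 0 < u t ∧ v t = 0} = 0 ∧
        ∃ M : ℝ, ∀ᵐ t ∂(μ.restrict {t | 0 < v t}), u t / v t ≤ M) →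
      sInf {lam : ℝ | 0 ≤ lam ∧
          IsPSDKernel (fun x y => (lam : ℂ) * fourierKernel μ v x y - fourierKernel μ u x y)}
        = essSup (fun t => u t / v t) (μ.restrict {t | 0 < v t})) := by
  simp only [isPSDKernel_const_mul_fourierKernel_sub_iff hu hv,
    ae_le_const_mul_iff_div_le hv0 hv.aemeasurable]
  refine ⟨⟨fun ⟨lam, _, hnull, hle⟩ => ⟨hnull, lam, hle⟩, fun ⟨hnull, M, hM⟩ =>
    ⟨max M 0, le_max_right M 0, hnull, hM.mono fun t ht => ht.trans (le_max_left M 0)⟩⟩,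
    fun ⟨hnull, _⟩ => ?_⟩
  simp only [hnull, true_and]
  exact sInf_nonneg_ae_le_eq_essSup (.of_forall fun t => div_nonneg (hu0 t) (hv0 t))

end CharFun

/-- For kernels `K, G` given as Fourier transforms of nonnegative `L¹` densities
`u, v` on `ℝ^d`, there exists `λ ≥ 0` with `λG − K` positive semidefinite iff
`{u > 0, v = 0}` is Lebesgue-null and `u/v` is essentially bounded on `{v > 0}`;
in that case the infimum of such `λ` equals the essential supremum of `u/v` on `{v > 0}`. -/
theorem fourierDensity_inclusion_iff (d : ℕ)
    (u v : EuclideanSpace ℝ (Fin d) → ℝ)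
    (hu0 : ∀ t, 0 ≤ u t) (hv0 : ∀ t, 0 ≤ v t)
    (hu : Integrable u) (hv : Integrable v)
    (K G : EuclideanSpace ℝ (Fin d) → EuclideanSpace ℝ (Fin d) → ℂ)
    (hK : ∀ x y, K x y
      = ∫ ξ, Complex.exp (Complex.I * ((inner ℝ (x - y) ξ : ℝ) : ℂ)) * (u ξ : ℂ))
    (hG : ∀ x y, G x y
      = ∫ ξ, Complex.exp (Complex.I * ((inner ℝ (x - y) ξ : ℝ) : ℂ)) * (v ξ : ℂ)) :
    ((∃ lam : ℝ, 0 ≤ lam ∧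
        IsPSDKernel (fun x y => (lam : ℂ) * G x y - K x y)) ↔
      (volume {t | 0 < u t ∧ v t = 0} = 0 ∧
        ∃ M : ℝ, ∀ᵐ t ∂(volume.restrict {t | 0 < v t}), u t / v t ≤ M)) ∧
    ((volume {t | 0 < u t ∧ v t = 0} = 0 ∧
        ∃ M : ℝ, ∀ᵐ t ∂(volume.restrict {t | 0 < v t}), u t / v t ≤ M) →
      sInf {lam : ℝ | 0 ≤ lam ∧
          IsPSDKernel (fun x y => (lam : ℂ) * G x y - K x y)}
        = essSup (fun t => u t / v t) (volume.restrict {t | 0 < v t})) := by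
  obtain ⟨rfl, rfl⟩ : K = fourierKernel volume u ∧ G = fourierKernel volume v :=
    ⟨funext₂ hK, funext₂ hG⟩
  exact fourierDensity_inclusion_iff_general hu0 hv0 hu hv
end

section
/- Let μ, ν be finite positive Borel measures on [0,∞) and, for each dimension d ∈ ℕ, define the radial kernels K_d(x,y) = ∫₀^∞ e^{−t‖x−y‖²} dμ(t) and G_d(x,y) = ∫₀^∞ e^{−t‖x−y‖²} dν(t) for x, y ∈ ℝ^d, where ‖·‖ is the Euclidean norm. Then the following are equivalent: (a) there exists λ ≥ 0 such that for every d ∈ ℕ the function λG_d − K_d is a positive semidefinite kernel on ℝ^d; (b) μ is absolutely continuous with respect to ν and dμ/dν is ν-essentially bounded. Moreover, in that case sup over d ∈ ℕ of the infimum λ(K_d,G_d) of admissible constants equals ‖dμ/dν‖_{L^∞_ν([0,∞))}. -/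
open MeasureTheory
open scoped ComplexOrder NNReal

/-!
If `φ (‖x - y‖²)` is positive semidefinite in every dimension, so is the kernel with profile
`r ↦ φ r - φ (r + 1)`, as one sees by moving points along an additional orthogonal coordinate.
Moreover `φ ≥ 0`, since otherwise a regular simplex with sufficiently many vertices would violate
positivity. Applied to the Laplace transform of the signed measure `ρ = λν - μ`, these two facts
give `∫ (1 - e⁻ᵗ)ⁿ e⁻ᵐᵗ dρ ≥ 0` for all `n` and `m`. Thus the image of `ρ` under `t ↦ e⁻ᵗ` has
nonnegative integrals against all Bernstein polynomials, hence against all nonnegative continuous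
functions on `[0, 1]`, and so `μ ≤ λν`, that is, `μ ≪ ν` and `dμ/dν ≤ λ`. Conversely, if `ρ ≥ 0`,
then `λG_d - K_d` is a mixture of Gaussian kernels.
-/

namespace IsPSDKernel

variable {X Y : Type*} {K L : X → X → ℂ}

lemma sum_nonneg (hK : IsPSDKernel K) {ι : Type*} [Fintype ι] (x : ι → X) (c : ι → ℂ) :
    0 ≤ ∑ j, ∑ k, c j * (starRingEnd ℂ) (c k) * K (x j) (x k) := by
  let e := (Fintype.equivFin ι).symm
  have h := hK _ (x ∘ e) (c ∘ e)
  simp only [Function.comp_apply] at h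
  rw [e.sum_comp fun j => ∑ k, c j * (starRingEnd ℂ) (c (e k)) * K (x j) (x (e k))] at h
  simpa only [fun j => e.sum_comp fun k => c j * (starRingEnd ℂ) (c k) * K (x j) (x k)] using h

lemma comp (hK : IsPSDKernel K) (f : Y → X) : IsPSDKernel fun x y => K (f x) (f y) :=
  fun n x c => hK n (f ∘ x) c

lemma add (hK : IsPSDKernel K) (hL : IsPSDKernel L) :
    IsPSDKernel fun x y => K x y + L x y := by
  intro n x c
  simpa only [mul_add, Finset.sum_add_distrib] using add_nonneg (hK n x c) (hL n x c)

lemma const_mul (hK : IsPSDKernel K) {a : ℂ} (ha : 0 ≤ a) :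
    IsPSDKernel fun x y => a * K x y := by
  intro n x c
  simpa only [Finset.mul_sum, mul_left_comm a] using mul_nonneg ha (hK n x c)

lemma mul_conj (f : X → ℂ) : IsPSDKernel fun x y => f x * (starRingEnd ℂ) (f y) := by
  intro n x c
  have h : ∑ j, ∑ k, c j * (starRingEnd ℂ) (c k) * (f (x j) * (starRingEnd ℂ) (f (x k)))
      = (∑ j, c j * f (x j)) * (starRingEnd ℂ) (∑ k, c k * f (x k)) := by
    simp only [map_sum, map_mul, Finset.sum_mul_sum, mul_mul_mul_comm]
  rw [h]
  exact mul_star_self_nonneg _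

lemma integral {α : Type*} [MeasurableSpace α] {μ : Measure α} {K : α → X → X → ℂ}
    (hK : ∀ t, IsPSDKernel (K t)) (hint : ∀ x y, Integrable (fun t => K t x y) μ) :
    IsPSDKernel fun x y => ∫ t, K t x y ∂μ := by
  intro n x c
  have hint' (j k) : Integrable
      (fun t => c j * (starRingEnd ℂ) (c k) * K t (x j) (x k)) μ := (hint _ _).const_mul _
  simp_rw [← integral_const_mul, ← integral_finsetSum _ fun k _ => hint' _ k]
  rw [← integral_finsetSum _ fun j _ => integrable_finsetSum _ fun k _ => hint' j k]
  exact integral_nonneg fun t => hK t n x c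

/- Evaluate the form at the points `f (x j)` and `g (x j)` with opposite coefficients. -/
lemma second_difference (hK : IsPSDKernel K) (f g : Y → X) :
    IsPSDKernel fun x y =>
      K (f x) (f y) - K (f x) (g y) - K (g x) (f y) + K (g x) (g y) := by
  intro n x c
  have h := hK.sum_nonneg (Sum.elim (f ∘ x) (g ∘ x)) (Sum.elim c (-c))
  simp only [Fintype.sum_sum_type, Sum.elim_inl, Sum.elim_inr, Function.comp_apply,
    Pi.neg_apply, map_neg, ← Finset.sum_add_distrib] at h
  refine h.trans_eq (Finset.sum_congr rfl fun j _ => Finset.sum_congr rfl fun k _ => ?_)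
  ring

lemma mul_sub_mono (hK : IsPSDKernel K) {r s : ℝ} (hrs : r ≤ s)
    (h : IsPSDKernel fun x y => r * K x y - L x y) :
    IsPSDKernel fun x y => s * K x y - L x y := by
  have heq (x y) : s * K x y - L x y = ((s - r : ℝ) : ℂ) * K x y + (r * K x y - L x y) := by
    push_cast
    ring
  simpa only [heq] using (hK.const_mul (Complex.zero_le_real.2 (sub_nonneg.2 hrs))).add h

end IsPSDKernel

open Complex in
lemma isPSDKernel_charFun {E : Type*} [SeminormedAddCommGroup E] [InnerProductSpace ℝ E]
    [MeasurableSpace E] [OpensMeasurableSpace E] (μ : Measure E) [IsFiniteMeasure μ] :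
    IsPSDKernel fun x y => charFun μ (x - y) := by
  have hmul (w x y : E) : exp (inner ℝ w (x - y) * I)
      = exp (inner ℝ w x * I) * (starRingEnd ℂ) (exp (inner ℝ w y * I)) := by
    rw [← exp_conj, ← exp_add, map_mul, conj_ofReal, conj_I, inner_sub_right]
    push_cast
    ring_nf
  simp only [charFun_apply]
  refine .integral (fun w => ?_) fun x y => ?_
  · simpa only [hmul] using .mul_conj fun x => exp (inner ℝ w x * I)
  · exact .of_bound (by fun_prop) 1 (ae_of_all _ fun w => (norm_exp_ofReal_mul_I _).le)

/-- The radial kernel `(x, y) ↦ φ (‖x - y‖²)` with profile `φ`. -/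
def radialKernel {E : Type*} [SeminormedAddCommGroup E] (φ : ℝ≥0 → ℝ) : E → E → ℂ :=
  fun x y => φ (‖x - y‖₊ ^ 2)

/-- A profile is radially positive semidefinite if its radial kernel is positive semidefinite
on Euclidean spaces of every dimension. -/
def IsRadialPSD (φ : ℝ≥0 → ℝ) : Prop :=
  ∀ d : ℕ, IsPSDKernel (radialKernel φ (E := EuclideanSpace ℝ (Fin d)))

namespace IsRadialPSD

variable {φ : ℝ≥0 → ℝ}

lemma isPSDKernel (hφ : IsRadialPSD φ) (E : Type*) [NormedAddCommGroup E]
    [InnerProductSpace ℝ E] [FiniteDimensional ℝ E] :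
    IsPSDKernel (radialKernel φ (E := E)) := by
  unfold radialKernel
  simpa only [radialKernel, ← map_sub, LinearIsometryEquiv.nnnorm_map]
    using (hφ (Module.finrank ℝ E)).comp (stdOrthonormalBasis ℝ E).repr

/- Adjoin an orthogonal coordinate and compare heights `0` and `√h`. -/
lemma sub_shift (hφ : IsRadialPSD φ) (h : ℝ≥0) : IsRadialPSD fun r => φ r - φ (r + h) := by
  intro d
  let lift (a : ℝ) (x : EuclideanSpace ℝ (Fin d)) : WithLp 2 (EuclideanSpace ℝ (Fin d) × ℝ) :=
    WithLp.toLp 2 (x, a)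
  have hnorm (a b : ℝ) (x y) :
      ‖lift a x - lift b y‖₊ ^ 2 = ‖x - y‖₊ ^ 2 + ‖a - b‖₊ ^ 2 := by
    ext
    simp [lift, WithLp.prod_norm_sq_eq_of_L2]
  have hdiff := (hφ.isPSDKernel _).second_difference (lift 0) (lift (NNReal.sqrt h))
  convert hdiff.const_mul (a := 1 / 2) (by simp) using 3 with x y
  have hsqrt : ‖(NNReal.sqrt h : ℝ)‖₊ ^ 2 = h := by rw [NNReal.nnnorm_eq, NNReal.sq_sqrt]
  simp only [radialKernel, hnorm, sub_self, sub_zero, zero_sub, nnnorm_neg, nnnorm_zero, hsqrt,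
    zero_pow two_ne_zero, add_zero]
  push_cast
  ring

/- The vertices of a regular simplex with `N + 1` vertices and squared side length `r` give
`0 ≤ φ 0 + N * φ r`, and `N` is arbitrary. -/
lemma nonneg (hφ : IsRadialPSD φ) (r : ℝ≥0) : 0 ≤ φ r := by
  have hN (N : ℕ) : 0 ≤ φ 0 + N * φ r := by
    obtain ⟨a, ha⟩ : ∃ a : ℝ, a ^ 2 = r / 2 := ⟨√(r / 2), Real.sq_sqrt (by positivity)⟩
    let v (i : Fin (N + 1)) : EuclideanSpace ℝ (Fin (N + 1)) := EuclideanSpace.single i a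
    have hv (i j : Fin (N + 1)) : ‖v i - v j‖₊ ^ 2 = if i = j then 0 else r := by
      ext
      rcases eq_or_ne i j with rfl | hij
      · simp
      · simp [v, norm_sub_sq_real, EuclideanSpace.inner_single_left, hij, ha]
    have hval (i j : Fin (N + 1)) :
        φ (‖v i - v j‖₊ ^ 2) = φ r + if i = j then φ 0 - φ r else 0 := by
      rw [hv]
      split_ifs <;> ring
    have hsum : 0 ≤ ∑ i, ∑ j, φ (‖v i - v j‖₊ ^ 2) := by
      simpa only [radialKernel, Pi.one_apply, map_one, one_mul, ← Complex.ofReal_sum,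
        Complex.zero_le_real] using hφ (N + 1) (N + 1) v 1
    have htotal : ∑ i, ∑ j, φ (‖v i - v j‖₊ ^ 2) = (N + 1 : ℕ) * (φ 0 + N * φ r) := by
      simp only [hval, Finset.sum_add_distrib, Finset.sum_const, Finset.sum_ite_eq,
        Finset.mem_univ, if_true, Finset.card_univ, Fintype.card_fin, nsmul_eq_mul]
      push_cast
      ring
    exact nonneg_of_mul_nonneg_right (htotal ▸ hsum) (by positivity)
  by_contra! hneg
  obtain ⟨N, hlt⟩ := exists_nat_gt (φ 0 / -φ r)
  rw [div_lt_iff₀ (neg_pos.2 hneg)] at hlt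
  linarith [hN N]

end IsRadialPSD

section LaplaceTransform

/-- The Laplace transform of a measure on `[0, ∞)`. -/
noncomputable def laplaceTransform (μ : Measure ℝ≥0) (r : ℝ≥0) : ℝ :=
  ∫ t, Real.exp (-(t * r)) ∂μ

lemma isPSDKernel_gaussian {E : Type*} [NormedAddCommGroup E] [InnerProductSpace ℝ E]
    [FiniteDimensional ℝ E] (t : ℝ≥0) :
    IsPSDKernel (radialKernel (fun r => Real.exp (-(t * r))) (E := E)) := by
  borelize E
  have hchar (x y : E) : charFun (ProbabilityTheory.stdGaussian E) (√(2 * t) • x - √(2 * t) • y)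
      = radialKernel (fun r => Real.exp (-(t * r))) x y := by
    rw [← smul_sub, ProbabilityTheory.charFun_stdGaussian, norm_smul, radialKernel]
    norm_cast
    rw [mul_pow, Real.norm_eq_abs, sq_abs, Real.sq_sqrt (by positivity)]
    congr 1
    push_cast
    ring
  simpa only [hchar] using
    (isPSDKernel_charFun (ProbabilityTheory.stdGaussian E)).comp (√(2 * t : ℝ) • ·)

variable {μ ν : Measure ℝ≥0} [IsFiniteMeasure μ] [IsFiniteMeasure ν]

lemma integrable_one_sub_exp_pow_mul_exp (n : ℕ) (r : ℝ≥0) :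
    Integrable (fun t : ℝ≥0 => (1 - Real.exp (-t)) ^ n * Real.exp (-(t * r))) μ := by
  refine .of_bound (by fun_prop) 1 (ae_of_all _ fun t => ?_)
  have hexp (s : ℝ≥0) : Real.exp (-s) ≤ 1 := Real.exp_le_one_iff.2 (by simp)
  have hsub : 0 ≤ 1 - Real.exp (-t) := sub_nonneg.2 (hexp t)
  rw [Real.norm_of_nonneg (by positivity)]
  exact mul_le_one₀ (pow_le_one₀ hsub (sub_le_self _ (Real.exp_nonneg _))) (Real.exp_nonneg _)
    (by exact_mod_cast hexp (t * r))

lemma integrable_exp_neg_mul (r : ℝ≥0) :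
    Integrable (fun t : ℝ≥0 => Real.exp (-(t * r))) μ := by
  simpa using integrable_one_sub_exp_pow_mul_exp (μ := μ) 0 r

lemma isPSDKernel_radialKernel_laplaceTransform {E : Type*} [NormedAddCommGroup E]
    [InnerProductSpace ℝ E] [FiniteDimensional ℝ E] :
    IsPSDKernel (radialKernel (laplaceTransform μ) (E := E)) := by
  unfold radialKernel
  simpa only [radialKernel, laplaceTransform, integral_complex_ofReal] using
    IsPSDKernel.integral (fun t => isPSDKernel_gaussian (E := E) t)
      fun x y => (integrable_exp_neg_mul (μ := μ) (‖x - y‖₊ ^ 2)).ofReal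

lemma laplaceTransform_add (r : ℝ≥0) :
    laplaceTransform (μ + ν) r = laplaceTransform μ r + laplaceTransform ν r :=
  integral_add_measure (integrable_exp_neg_mul r) (integrable_exp_neg_mul r)

lemma laplaceTransform_smul (c : ℝ≥0) (μ : Measure ℝ≥0) (r : ℝ≥0) :
    laplaceTransform (c • μ) r = c * laplaceTransform μ r :=
  integral_smul_nnreal_measure _ c

lemma isRadialPSD_laplaceTransform_sub_of_le (h : μ ≤ ν) :
    IsRadialPSD fun r => laplaceTransform ν r - laplaceTransform μ r := by
  intro d
  have hsub (r) : laplaceTransform ν r - laplaceTransform μ r = laplaceTransform (ν - μ) r := by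
    rw [sub_eq_iff_eq_add, ← laplaceTransform_add, Measure.sub_add_cancel_of_le h]
  simpa only [hsub] using isPSDKernel_radialKernel_laplaceTransform

lemma integral_one_sub_exp_pow_succ_mul_exp (n : ℕ) (r : ℝ≥0) :
    ∫ t : ℝ≥0, (1 - Real.exp (-t)) ^ (n + 1) * Real.exp (-(t * r)) ∂μ
      = ∫ t : ℝ≥0, (1 - Real.exp (-t)) ^ n * Real.exp (-(t * r)) ∂μ
        - ∫ t : ℝ≥0, (1 - Real.exp (-t)) ^ n * Real.exp (-(t * (r + 1 : ℝ≥0))) ∂μ := by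
  rw [← integral_sub (integrable_one_sub_exp_pow_mul_exp n r)
    (integrable_one_sub_exp_pow_mul_exp n (r + 1))]
  congr 1 with t
  push_cast
  rw [mul_add, neg_add, Real.exp_add, mul_one]
  ring

lemma IsRadialPSD.integral_one_sub_exp_pow_sub
    (h : IsRadialPSD fun r => laplaceTransform ν r - laplaceTransform μ r) (n : ℕ) :
    IsRadialPSD fun r => ∫ t : ℝ≥0, (1 - Real.exp (-t)) ^ n * Real.exp (-(t * r)) ∂ν
      - ∫ t : ℝ≥0, (1 - Real.exp (-t)) ^ n * Real.exp (-(t * r)) ∂μ := by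
  induction n with
  | zero => simpa [laplaceTransform] using h
  | succ n ih =>
    simpa only [integral_one_sub_exp_pow_succ_mul_exp, sub_sub_sub_comm] using ih.sub_shift 1

end LaplaceTransform

section MeasureComparison

lemma measure_le_of_map_le {α β : Type*} [MeasurableSpace α] [MeasurableSpace β]
    {μ ν : Measure α} {f : α → β} (hf : MeasurableEmbedding f) (h : μ.map f ≤ ν.map f) :
    μ ≤ ν := by
  refine Measure.le_iff'.2 fun s => ?_
  simpa only [hf.map_apply, hf.injective.preimage_image] using h (f '' s)

lemma measure_le_of_forall_lintegral_le {X : Type*} [TopologicalSpace X]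
    [TopologicalSpace.PseudoMetrizableSpace X] [MeasurableSpace X] [BorelSpace X]
    {μ ν : Measure X} [IsFiniteMeasure μ] [IsFiniteMeasure ν]
    (h : ∀ f : BoundedContinuousFunction X ℝ≥0, ∫⁻ x, f x ∂μ ≤ ∫⁻ x, f x ∂ν) : μ ≤ ν := by
  have hclosed (F : Set X) (hF : IsClosed F) : μ F ≤ ν F :=
    le_of_tendsto_of_tendsto' (HasOuterApproxClosed.tendsto_lintegral_apprSeq hF μ)
      (HasOuterApproxClosed.tendsto_lintegral_apprSeq hF ν) fun n => h (hF.apprSeq n)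
  refine Measure.le_iff.2 fun s hs => ?_
  rw [hs.measure_eq_iSup_isClosed_of_ne_top (measure_ne_top μ s)]
  exact iSup₂_le fun F hFs => iSup_le fun hF => (hclosed F hF).trans (measure_mono hFs)

lemma continuous_integral_continuousMap {X : Type*} [TopologicalSpace X] [CompactSpace X]
    [MeasurableSpace X] [BorelSpace X] (μ : Measure X) [IsFiniteMeasure μ] :
    Continuous fun f : C(X, ℝ) => ∫ x, f x ∂μ := by
  have hLp (f : C(X, ℝ)) : ∫ x, ContinuousMap.toLp (E := ℝ) 1 μ ℝ f x ∂μ = ∫ x, f x ∂μ :=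
    integral_congr_ae (ContinuousMap.coeFn_toLp μ f)
  simpa only [Function.comp_def, hLp] using
    continuous_integral.comp (ContinuousMap.toLp (E := ℝ) 1 μ ℝ).continuous

variable {μ ν : Measure unitInterval} [IsFiniteMeasure μ] [IsFiniteMeasure ν]

lemma integral_le_of_forall_integral_bernstein_le
    (h : ∀ n k, ∫ x, bernstein n k x ∂μ ≤ ∫ x, bernstein n k x ∂ν)
    {f : C(unitInterval, ℝ)} (hf : 0 ≤ f) : ∫ x, f x ∂μ ≤ ∫ x, f x ∂ν := by
  have happrox (n : ℕ) (ρ : Measure unitInterval) [IsFiniteMeasure ρ] :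
      ∫ x, bernsteinApproximation n f x ∂ρ
        = ∑ k : Fin (n + 1), (∫ x, bernstein n k x ∂ρ) * f (bernstein.z k) := by
    have hint (k : Fin (n + 1)) : Integrable (fun x => bernstein n k x * f (bernstein.z k)) ρ :=
      Continuous.integrable_of_hasCompactSupport (by fun_prop) (.of_compactSpace _)
    simp only [bernsteinApproximation.apply, smul_eq_mul (α := ℝ)]
    rw [integral_finsetSum _ fun k _ => hint k]
    simp only [integral_mul_const]
  refine le_of_tendsto_of_tendsto'
    (((continuous_integral_continuousMap μ).tendsto f).comp (bernsteinApproximation_uniform f))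
    (((continuous_integral_continuousMap ν).tendsto f).comp (bernsteinApproximation_uniform f))
    fun n => ?_
  simp only [Function.comp_apply, happrox]
  exact Finset.sum_le_sum fun k _ => mul_le_mul_of_nonneg_right (h n k) (hf _)

lemma measure_le_of_forall_integral_pow_mul_le
    (h : ∀ n m : ℕ, ∫ x : unitInterval, (1 - x : ℝ) ^ n * (x : ℝ) ^ m ∂μ
      ≤ ∫ x : unitInterval, (1 - x : ℝ) ^ n * (x : ℝ) ^ m ∂ν) : μ ≤ ν := by
  have hbernstein (n k) : ∫ x, bernstein n k x ∂μ ≤ ∫ x, bernstein n k x ∂ν := by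
    simp only [bernstein_apply, mul_assoc, mul_comm ((_ : ℝ) ^ k), integral_const_mul]
    exact mul_le_mul_of_nonneg_left (h (n - k) k) (Nat.cast_nonneg _)
  refine measure_le_of_forall_lintegral_le fun f => ?_
  have hint (ρ : Measure unitInterval) [IsFiniteMeasure ρ] : Integrable (fun x => (f x : ℝ)) ρ :=
    Continuous.integrable_of_hasCompactSupport (by fun_prop) (.of_compactSpace _)
  rw [lintegral_coe_eq_integral _ (hint μ), lintegral_coe_eq_integral _ (hint ν)]
  exact ENNReal.ofReal_le_ofReal <| integral_le_of_forall_integral_bernstein_le hbernstein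
    (f := ⟨fun x => f x, by fun_prop⟩) fun x => (f x).coe_nonneg

end MeasureComparison

/-- The embedding `t ↦ e⁻ᵗ` of `[0, ∞)` into the unit interval. -/
noncomputable def expNeg (t : ℝ≥0) : unitInterval :=
  ⟨Real.exp (-t), Real.exp_nonneg _, Real.exp_le_one_iff.2 (by simp)⟩

lemma measurableEmbedding_expNeg : MeasurableEmbedding expNeg := by
  refine Continuous.measurableEmbedding (by unfold expNeg; fun_prop) fun s t hst => ?_
  simpa [expNeg] using congr_arg Subtype.val hst

theorem isRadialPSD_laplaceTransform_sub_iff {μ ν : Measure ℝ≥0} [IsFiniteMeasure μ]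
    [IsFiniteMeasure ν] :
    IsRadialPSD (fun r => laplaceTransform ν r - laplaceTransform μ r) ↔ μ ≤ ν := by
  refine ⟨fun h => ?_, isRadialPSD_laplaceTransform_sub_of_le⟩
  refine measure_le_of_map_le measurableEmbedding_expNeg
    (measure_le_of_forall_integral_pow_mul_le fun n m => ?_)
  simp only [measurableEmbedding_expNeg.integral_map, expNeg, ← Real.exp_nat_mul]
  simpa [mul_comm] using (h.integral_one_sub_exp_pow_sub n).nonneg m

theorem measure_le_smul_iff_essSup_rnDeriv_le {α : Type*} [MeasurableSpace α] {μ ν : Measure α}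
    [SigmaFinite ν] [μ.HaveLebesgueDecomposition ν] {r : ENNReal} :
    μ ≤ r • ν ↔ μ ≪ ν ∧ essSup (μ.rnDeriv ν) ν ≤ r := by
  constructor
  · intro h
    have hac : μ ≪ ν := Measure.absolutelyContinuous_of_le_smul h
    refine ⟨hac, essSup_le_of_ae_le r ?_⟩
    refine ae_le_of_forall_setLIntegral_le_of_sigmaFinite (μ.measurable_rnDeriv ν) fun s _ _ => ?_
    simpa only [Measure.setLIntegral_rnDeriv hac, setLIntegral_const, Measure.smul_apply,
      smul_eq_mul] using h s
  · rintro ⟨hac, h⟩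
    rw [← Measure.withDensity_rnDeriv_eq μ ν hac, ← withDensity_const]
    exact withDensity_mono ((ENNReal.ae_le_essSup _).mono fun _ ht => ht.trans h)

lemma ciSup_csInf_eq_of_iInter_eq_Ici {ι α : Type*} [Nonempty ι]
    [ConditionallyCompleteLinearOrder α] [DenselyOrdered α] {S : ι → Set α} {M : α}
    (hup : ∀ i, IsUpperSet (S i)) (hbdd : ∀ i, BddBelow (S i)) (hS : ⋂ i, S i = Set.Ici M) :
    ⨆ i, sInf (S i) = M := by
  have hM (i) : M ∈ S i := Set.iInter_subset S i (hS ▸ Set.self_mem_Ici)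
  refine ciSup_eq_of_forall_le_of_forall_lt_exists_gt (fun i => csInf_le (hbdd i) (hM i))
    fun w hw => ?_
  by_contra! hle
  obtain ⟨v, hwv, hvM⟩ := exists_between hw
  refine hvM.not_ge (show v ∈ Set.Ici M from hS ▸ Set.mem_iInter.2 fun i => ?_)
  obtain ⟨u, hu, huv⟩ := exists_lt_of_csInf_lt ⟨M, hM i⟩ ((hle i).trans_lt hwv)
  exact hup i huv.le hu

theorem forall_isPSDKernel_mul_sub_iff {μ ν : Measure ℝ≥0} [IsFiniteMeasure μ]
    [IsFiniteMeasure ν] {r : ℝ} (hr : 0 ≤ r) :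
    (∀ d : ℕ, IsPSDKernel fun x y : EuclideanSpace ℝ (Fin d) =>
        (r : ℂ) * radialKernel (laplaceTransform ν) x y - radialKernel (laplaceTransform μ) x y) ↔
      μ ≪ ν ∧ essSup (μ.rnDeriv ν) ν ≤ ENNReal.ofReal r := by
  lift r to ℝ≥0 using hr
  rw [ENNReal.ofReal_coe_nnreal, ← measure_le_smul_iff_essSup_rnDeriv_le]
  change _ ↔ μ ≤ r • ν
  rw [← isRadialPSD_laplaceTransform_sub_iff]
  unfold IsRadialPSD radialKernel
  simp only [laplaceTransform_smul, Complex.ofReal_sub, Complex.ofReal_mul]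

/-- For radial kernels `K_d, G_d` given as Laplace transforms of finite positive Borel
measures `μ, ν` on `[0,∞)`, a single constant `λ ≥ 0` making `λG_d − K_d` positive
semidefinite for every dimension `d` exists iff `μ ≪ ν` with `dμ/dν` `ν`-essentially
bounded; in that case `sup_d λ(K_d, G_d)` equals the `ν`-essential supremum of `dμ/dν`. -/
theorem radial_inclusion_iff
    (μ ν : Measure ℝ≥0) [IsFiniteMeasure μ] [IsFiniteMeasure ν]
    (K G : ∀ d : ℕ, EuclideanSpace ℝ (Fin d) → EuclideanSpace ℝ (Fin d) → ℂ)
    (hK : ∀ (d : ℕ) (x y : EuclideanSpace ℝ (Fin d)),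
      K d x y = ((∫ t, Real.exp (-(t : ℝ) * ‖x - y‖ ^ 2) ∂μ : ℝ) : ℂ))
    (hG : ∀ (d : ℕ) (x y : EuclideanSpace ℝ (Fin d)),
      G d x y = ((∫ t, Real.exp (-(t : ℝ) * ‖x - y‖ ^ 2) ∂ν : ℝ) : ℂ)) :
    ((∃ lam : ℝ, 0 ≤ lam ∧ ∀ d : ℕ,
        IsPSDKernel (fun x y => (lam : ℂ) * G d x y - K d x y)) ↔
      (μ ≪ ν ∧ essSup (μ.rnDeriv ν) ν < ⊤)) ∧
    ((μ ≪ ν ∧ essSup (μ.rnDeriv ν) ν < ⊤) →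
      (⨆ d : ℕ, sInf {lam : ℝ | 0 ≤ lam ∧
          IsPSDKernel (fun x y => (lam : ℂ) * G d x y - K d x y)})
        = (essSup (μ.rnDeriv ν) ν).toReal) := by
  obtain rfl : K = fun _ => radialKernel (laplaceTransform μ) := by
    ext d x y
    simp [hK, radialKernel, laplaceTransform]
  obtain rfl : G = fun _ => radialKernel (laplaceTransform ν) := by
    ext d x y
    simp [hG, radialKernel, laplaceTransform]
  have hdom {lam : ℝ} (hlam : 0 ≤ lam) :=
    forall_isPSDKernel_mul_sub_iff (μ := μ) (ν := ν) hlam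
  refine ⟨⟨fun ⟨lam, hlam, h⟩ => ?_, fun ⟨hac, hfin⟩ => ?_⟩, fun ⟨hac, hfin⟩ => ?_⟩
  · exact ((hdom hlam).1 h).imp_right fun hle => hle.trans_lt ENNReal.ofReal_lt_top
  · exact ⟨_, ENNReal.toReal_nonneg,
      (hdom ENNReal.toReal_nonneg).2 ⟨hac, (ENNReal.ofReal_toReal hfin.ne).ge⟩⟩
  · refine ciSup_csInf_eq_of_iInter_eq_Ici (fun d r s hrs hr => ?_) (fun d => ⟨0, fun _ h => h.1⟩)
      (Set.ext fun lam => ?_)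
    · exact ⟨hr.1.trans hrs, isPSDKernel_radialKernel_laplaceTransform.mul_sub_mono hrs hr.2⟩
    · simp only [Set.mem_iInter, Set.mem_ofPred_eq, Set.mem_Ici, forall_and, forall_const]
      refine ⟨fun ⟨h0, h⟩ => ENNReal.toReal_le_of_le_ofReal h0 ((hdom h0).1 h).2, fun h => ?_⟩
      have h0 := ENNReal.toReal_nonneg.trans h
      exact ⟨h0, (hdom h0).2 ⟨hac, (ENNReal.le_ofReal_iff_toReal_le hfin.ne h0).2 h⟩⟩
end
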